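/- Under the push-subgradient algorithm, if the graph sequence {𝔾(t)} is uniformly strongly connected and the subgradients are uniformly bounded (‖g_i(t)‖₂ ≤ G for all i, t), then there exists a constant C > 0, depending on n, L, G, x(0), g(0) and z* but not on T, such that for every integer T ≥ 1 and every agent k ∈ {1,…,n}, running the algorithm with fixed stepsize α(t) = 1/√T for t ∈ {0,1,…,T−1} yields f( (Σ_{τ=0}^{T−1} z_k(τ)) / T ) − f(z*) ≤ C/√T. -/

import Mathlib

open Filter Finset
open scoped InnerProductSpace

def pPhi {n : ℕ} (W : ℕ → Matrix (Fin n) (Fin n) ℝ) (t : ℕ) : ℕ → Matrix (Fin n) (Fin n) ℝ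
  | 0 => 1
  | m + 1 => W (t + m) * pPhi W t m

lemma pPhi_nonneg {n : ℕ} (W : ℕ → Matrix (Fin n) (Fin n) ℝ)
    (hWnonneg : ∀ t i j, 0 ≤ W t i j) (t m : ℕ) (i j : Fin n) : 0 ≤ pPhi W t m i j := by
  induction m generalizing i with
  | zero => 
    simp only [pPhi, Matrix.one_apply]; split_ifs <;> norm_num
  | succ m ih => 
    simp only [pPhi, Matrix.mul_apply]
    exact Finset.sum_nonneg fun l _ => mul_nonneg (hWnonneg _ _ _) (ih l)

lemma pPhi_pos {n : ℕ} (W : ℕ → Matrix (Fin n) (Fin n) ℝ)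
    (hWnonneg : ∀ t i j, 0 ≤ W t i j)
    (hWdiag : ∀ t i, 0 < W t i i)
    (β : ℝ) (hβ : 0 < β)
    (hWβ : ∀ t i j, 0 < W t i j → β ≤ W t i j)
    (L : ℕ)
    (hUSC : ∀ t : ℕ, ∀ i j : Fin n,
      Relation.TransGen (fun u v : Fin n => ∃ k ∈ Finset.Ico t (t + L), 0 < W k v u) i j)
    (t : ℕ) (i j : Fin n) : β ^ (n * L) ≤ pPhi W t (n * L) i j := by
  set S : ℕ → Finset (Fin n) := fun m => Finset.univ.filter (fun i => β ^ m ≤ pPhi W t m i j) with hS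
  have hstep : ∀ m l i, l ∈ S m → 0 < W (t + m) i l → i ∈ S (m + 1) := by
    intro m l i hl hW
    simp only [hS, Finset.mem_filter, Finset.mem_univ, true_and] at hl ⊢
    simp only [pPhi, Matrix.mul_apply]
    calc β ^ (m+1) = β * β ^ m := by ring
      _ ≤ W (t + m) i l * pPhi W t m l j :=
        mul_le_mul (hWβ _ _ _ hW) hl (by positivity) (hWnonneg _ _ _)
      _ ≤ _ := Finset.single_le_sum (f := fun l => W (t + m) i l * pPhi W t m l j)
        (fun l _ => mul_nonneg (hWnonneg _ _ _) (pPhi_nonneg W hWnonneg _ _ _ _)) (Finset.mem_univ l)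
  have hmono : Monotone S := monotone_nat_of_le_succ fun m l hl => hstep m l l hl (hWdiag _ _)
  have hj0 : j ∈ S 0 := by simp [hS, pPhi]
  have hcard : ∀ k, S (k * L) = Finset.univ ∨ k + 1 ≤ (S (k * L)).card := by
    intro k
    induction k with
    | zero => 
      right
      simp only [zero_mul, zero_add]
      exact Finset.card_pos.mpr ⟨j, hj0⟩
    | succ k ih =>
      have hsub : S (k * L) ⊆ S ((k + 1) * L) := hmono (Nat.mul_le_mul_right _ (Nat.le_succ k))
      rcases ih with h | h
      · left
        exact Finset.eq_univ_of_forall fun i => hsub (h ▸ Finset.mem_univ i)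
      by_cases hu : S (k * L) = Finset.univ
      · left
        exact Finset.eq_univ_of_forall fun i => hsub (hu ▸ Finset.mem_univ i)
      right
      have hss : S (k * L) ⊂ S ((k + 1) * L) := by
        refine (Finset.ssubset_iff_subset_ne).mpr ⟨hsub, fun heq => hu ?_⟩
        have hcl : ∀ v, Relation.TransGen (fun u v : Fin n => ∃ k' ∈ Finset.Ico (t + k * L) (t + k * L + L), 0 < W k' v u) j v → v ∈ S (k * L) := by
          have key : ∀ u v, u ∈ S (k * L) → (∃ k' ∈ Finset.Ico (t + k * L) (t + k * L + L), 0 < W k' v u) → v ∈ S (k * L) := by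
            rintro u v hu ⟨k', hk', hW⟩
            rw [Finset.mem_Ico] at hk'
            obtain ⟨m, rfl⟩ : ∃ m, k' = t + m := ⟨k' - t, by omega⟩
            rw [heq]
            refine hmono (a := m + 1) ?_ (hstep m u v (hmono (a := k * L) (by omega) hu) hW)
            have : (k + 1) * L = k * L + L := by ring
            omega
          intro v hv
          induction hv with
          | single h => exact key _ _ (hmono (Nat.zero_le _) hj0) h
          | tail _ h ih => exact key _ _ ih h
        exact Finset.eq_univ_of_forall fun v => hcl v (hUSC _ _ _)
      have := Finset.card_lt_card hss
      omega
  have hfin : S (n * L) = Finset.univ := by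
    rcases hcard n with h | h
    · exact h
    · have := Finset.card_le_univ (S (n * L))
      simp at this
      omega
  have : i ∈ S (n * L) := hfin ▸ Finset.mem_univ i
  simpa [hS] using this

lemma row_contract {n : ℕ} {E : Type*} [NormedAddCommGroup E] [NormedSpace ℝ E]
    (p q : Fin n → ℝ) (hp : ∀ i, 0 ≤ p i) (hq : ∀ i, 0 ≤ q i) (hp1 : ∑ i, p i = 1)
    (hq1 : ∑ i, q i = 1) (ε : ℝ) (hqε : ∀ i, ε ≤ q i) (z : Fin n → E) (V : ℝ)
    (hV : ∀ i j, ‖z i - z j‖ ≤ V) (hV0 : 0 ≤ V) :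
    ‖∑ i, p i • z i - ∑ i, q i • z i‖ ≤ (1 - ε) * V := by
  have h1 : ∑ i, p i • z i - ∑ i, q i • z i = ∑ i, ∑ j, (p i * q j) • (z i - z j) := by
    simp only [smul_sub, Finset.sum_sub_distrib]
    congr 1
    · refine Finset.sum_congr rfl fun i _ => ?_
      rw [← Finset.sum_smul, ← Finset.mul_sum, hq1, mul_one]
    · rw [Finset.sum_comm]
      refine Finset.sum_congr rfl fun i _ => ?_
      rw [← Finset.sum_smul, ← Finset.sum_mul, hp1, one_mul]
  rw [h1]
  have h2 : ∀ i j, ‖(p i * q j) • (z i - z j)‖ ≤ (p i * q j) * V - (if i = j then p i * q j * V else 0) := by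
    intro i j
    rw [norm_smul, Real.norm_of_nonneg (mul_nonneg (hp i) (hq j))]
    split_ifs with h
    · subst h; simp
    · rw [sub_zero]
      exact mul_le_mul_of_nonneg_left (hV i j) (mul_nonneg (hp i) (hq j))
  calc _ ≤ ∑ i, ∑ j, ‖(p i * q j) • (z i - z j)‖ :=
        (norm_sum_le _ _).trans (Finset.sum_le_sum fun i _ => norm_sum_le _ _)
    _ ≤ ∑ i, ∑ j, ((p i * q j) * V - (if i = j then p i * q j * V else 0)) :=
        Finset.sum_le_sum fun i _ => Finset.sum_le_sum fun j _ => h2 i j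
    _ = ∑ i, (p i * V - p i * q i * V) := by
        refine Finset.sum_congr rfl fun i _ => ?_
        rw [Finset.sum_sub_distrib, Finset.sum_ite_eq, ← Finset.sum_mul, ← Finset.mul_sum, hq1]
        simp
    _ ≤ ∑ i, p i * ((1 - ε) * V) := by
        refine Finset.sum_le_sum fun i _ => ?_
        have : p i * V * ε ≤ p i * V * q i := mul_le_mul_of_nonneg_left (hqε i) (mul_nonneg (hp i) hV0)
        linarith
    _ = _ := by rw [← Finset.sum_mul, hp1, one_mul]

lemma opt_lower {n d : ℕ} (f : Fin n → EuclideanSpace ℝ (Fin d) → ℝ)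
    (hconv : ∀ i, ConvexOn ℝ Set.univ (f i)) (zs : EuclideanSpace ℝ (Fin d))
    (hmin : ∀ w, ∑ i, f i zs ≤ ∑ i, f i w) :
    ∃ K : ℝ, 0 ≤ K ∧ ∀ (p : EuclideanSpace ℝ (Fin d)) (v : Fin n → EuclideanSpace ℝ (Fin d)) (δ : ℝ),
      (∀ i, ‖v i - p‖ ≤ δ) → -(n * K * δ) ≤ ∑ i, (f i (v i) - f i zs) := by
  have hlip : ∀ i, ∃ K : NNReal, ∃ t ∈ nhds zs, LipschitzOnWith K (f i) t := fun i =>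
    ((hconv i).locallyLipschitz) zs
  choose K t ht hK using hlip
  refine ⟨∑ i, (K i : ℝ), Finset.sum_nonneg fun i _ => (K i).2, ?_⟩
  intro p v δ hδ
  have hev : ∀ u : EuclideanSpace ℝ (Fin d), ∀ i, ∀ᶠ θ : ℝ in nhdsWithin 0 (Set.Ioi 0), zs + θ • (u - zs) ∈ t i := by
    intro u i
    have hc : Continuous (fun θ : ℝ => zs + θ • (u - zs)) := by fun_prop
    have := hc.tendsto 0
    simp only [zero_smul, add_zero] at this
    exact (this.mono_left nhdsWithin_le_nhds) (ht i)
  have h1 : ∀ᶠ θ : ℝ in nhdsWithin 0 (Set.Ioi 0), θ < 1 :=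
    nhdsWithin_le_nhds (Iio_mem_nhds (by norm_num))
  have hpos : ∀ᶠ θ : ℝ in nhdsWithin 0 (Set.Ioi 0), 0 < θ := self_mem_nhdsWithin
  obtain ⟨θ, ⟨hθ1, hθ0⟩, hA, hB⟩ := ((h1.and hpos).and
    ((Filter.eventually_all.mpr fun i => hev (v i) i).and (Filter.eventually_all.mpr fun i => hev p i))).exists
  have hi : ∀ i, f i (zs + θ • (p - zs)) - f i zs - θ * ((∑ i, (K i : ℝ)) * δ) ≤ θ * (f i (v i) - f i zs) := by
    intro i
    have hcv := (hconv i).2 (Set.mem_univ (v i)) (Set.mem_univ zs) hθ0.le (sub_nonneg.mpr hθ1.le) (by ring)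
    have e1 : θ • v i + (1 - θ) • zs = zs + θ • (v i - zs) := by
      module
    rw [e1] at hcv
    have hl := (hK i).dist_le_mul _ (hB i) _ (hA i)
    rw [dist_eq_norm, dist_eq_norm] at hl
    have e2 : zs + θ • (p - zs) - (zs + θ • (v i - zs)) = θ • (p - v i) := by module
    rw [e2, norm_smul, Real.norm_of_nonneg hθ0.le, norm_sub_rev p] at hl
    have h3 := (le_abs_self _).trans hl
    have h4 : (K i : ℝ) * (θ * ‖v i - p‖) ≤ θ * ((∑ i, (K i : ℝ)) * δ) := by
      have : (K i : ℝ) ≤ ∑ i, (K i : ℝ) := Finset.single_le_sum (f := fun i => (K i : ℝ)) (fun i _ => (K i).2) (Finset.mem_univ i)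
      have := mul_le_mul this (hδ i) (norm_nonneg _) (Finset.sum_nonneg fun i _ => (K i).2)
      nlinarith
    simp only [smul_eq_mul] at hcv
    linarith
  have hs := Finset.sum_le_sum (s := Finset.univ) fun i _ => hi i
  rw [← Finset.mul_sum, Finset.sum_sub_distrib, Finset.sum_sub_distrib] at hs
  have := hmin (zs + θ • (p - zs))
  simp only [Finset.sum_const, Finset.card_univ, Fintype.card_fin, nsmul_eq_mul] at hs
  have h5 : θ * (-(n * (∑ i, (K i : ℝ)) * δ)) ≤ θ * ∑ i, (f i (v i) - f i zs) := by
    linarith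
  exact le_of_mul_le_mul_left h5 hθ0

lemma l1_stoch {n : ℕ} {E : Type*} [NormedAddCommGroup E] [NormedSpace ℝ E]
    (A : Matrix (Fin n) (Fin n) ℝ) (hA : ∀ i j, 0 ≤ A i j) (hc : ∀ j, ∑ i, A i j = 1)
    (v : Fin n → E) : ∑ i, ‖∑ j, A i j • v j‖ ≤ ∑ j, ‖v j‖ := by
  calc _ ≤ ∑ i, ∑ j, A i j * ‖v j‖ := by
        refine Finset.sum_le_sum fun i _ => (norm_sum_le _ _).trans (le_of_eq ?_)
        refine Finset.sum_congr rfl fun j _ => ?_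
        rw [norm_smul, Real.norm_of_nonneg (hA i j)]
    _ = _ := by
        rw [Finset.sum_comm]
        refine Finset.sum_congr rfl fun j _ => ?_
        rw [← Finset.sum_mul, hc, one_mul]

lemma pPhi_pert {n : ℕ} {E : Type*} [NormedAddCommGroup E] [NormedSpace ℝ E]
    (W : ℕ → Matrix (Fin n) (Fin n) ℝ)
    (hWnonneg : ∀ t i j, 0 ≤ W t i j) (hWcol : ∀ t j, ∑ i, W t i j = 1)
    (x g : ℕ → Fin n → E) (a G : ℝ) (ha : 0 ≤ a) (hG : ∀ t i, ‖g t i‖ ≤ G)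
    (hx : ∀ t i, x (t + 1) i = ∑ j, W t i j • (x t j - a • g t j)) (t m : ℕ) :
    ∑ i, ‖x (t + m) i - ∑ l, pPhi W t m i l • x t l‖ ≤ m * (n * (a * G)) := by
  induction m with
  | zero => simp [pPhi, Matrix.one_apply]
  | succ m ih =>
    have h1 : ∀ i, x (t + (m + 1)) i - ∑ l, pPhi W t (m + 1) i l • x t l
        = ∑ j, W (t + m) i j • ((x (t + m) j - ∑ l, pPhi W t m j l • x t l) - a • g (t + m) j) := by
      intro i
      have e : ∑ l, pPhi W t (m + 1) i l • x t l
          = ∑ j, W (t + m) i j • ∑ l, pPhi W t m j l • x t l := by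
        simp only [pPhi, Matrix.mul_apply, Finset.sum_smul, Finset.smul_sum, mul_smul]
        rw [Finset.sum_comm]
      rw [e, ← add_assoc, hx, ← Finset.sum_sub_distrib]
      refine Finset.sum_congr rfl fun j _ => ?_
      rw [← smul_sub]
      congr 1
      abel
    simp only [h1]
    refine (l1_stoch _ (hWnonneg _) (hWcol _) _).trans ?_
    have h2 : ∀ j, ‖(x (t + m) j - ∑ l, pPhi W t m j l • x t l) - a • g (t + m) j‖
        ≤ ‖x (t + m) j - ∑ l, pPhi W t m j l • x t l‖ + a * G := by
      intro j
      refine (norm_sub_le _ _).trans ?_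
      rw [norm_smul, Real.norm_of_nonneg ha]
      have := mul_le_mul_of_nonneg_left (hG (t + m) j) ha
      linarith
    refine (Finset.sum_le_sum fun j _ => h2 j).trans ?_
    rw [Finset.sum_add_distrib]
    simp only [Finset.sum_const, Finset.card_univ, Fintype.card_fin, nsmul_eq_mul]
    push_cast
    linarith

lemma x_l1 {n : ℕ} {E : Type*} [NormedAddCommGroup E] [NormedSpace ℝ E]
    (W : ℕ → Matrix (Fin n) (Fin n) ℝ)
    (hWnonneg : ∀ t i j, 0 ≤ W t i j) (hWcol : ∀ t j, ∑ i, W t i j = 1)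
    (x g : ℕ → Fin n → E) (a G : ℝ) (ha : 0 ≤ a) (hG : ∀ t i, ‖g t i‖ ≤ G)
    (hx : ∀ t i, x (t + 1) i = ∑ j, W t i j • (x t j - a • g t j)) (m : ℕ) :
    ∑ i, ‖x m i‖ ≤ ∑ i, ‖x 0 i‖ + m * (n * (a * G)) := by
  induction m with
  | zero => simp
  | succ m ih =>
    simp only [hx]
    refine (l1_stoch _ (hWnonneg _) (hWcol _) _).trans ?_
    have h2 : ∀ j, ‖x m j - a • g m j‖ ≤ ‖x m j‖ + a * G := by
      intro j
      refine (norm_sub_le _ _).trans ?_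
      rw [norm_smul, Real.norm_of_nonneg ha]
      have := mul_le_mul_of_nonneg_left (hG m j) ha
      linarith
    refine (Finset.sum_le_sum fun j _ => h2 j).trans ?_
    rw [Finset.sum_add_distrib]
    simp only [Finset.sum_const, Finset.card_univ, Fintype.card_fin, nsmul_eq_mul]
    push_cast
    linarith

lemma y_phi {n : ℕ} (W : ℕ → Matrix (Fin n) (Fin n) ℝ) (y : ℕ → Fin n → ℝ)
    (hyrec : ∀ t i, y (t + 1) i = ∑ j, W t i j * y t j) (t m : ℕ) (i : Fin n) :
    y (t + m) i = ∑ l, pPhi W t m i l * y t l := by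
  induction m generalizing i with
  | zero => simp [pPhi, Matrix.one_apply]
  | succ m ih =>
    rw [← add_assoc, hyrec]
    simp only [pPhi, Matrix.mul_apply, ih, Finset.sum_mul, Finset.mul_sum]
    rw [Finset.sum_comm]
    simp only [mul_assoc]

lemma y_sum {n : ℕ} (W : ℕ → Matrix (Fin n) (Fin n) ℝ) (y : ℕ → Fin n → ℝ)
    (hWcol : ∀ t j, ∑ i, W t i j = 1) (hy0 : ∀ i, y 0 i = 1)
    (hyrec : ∀ t i, y (t + 1) i = ∑ j, W t i j * y t j) (t : ℕ) : ∑ i, y t i = n := by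
  induction t with
  | zero => simp [hy0]
  | succ t ih =>
    simp only [hyrec]
    rw [Finset.sum_comm, ← ih]
    refine Finset.sum_congr rfl fun j _ => ?_
    rw [← Finset.sum_mul, hWcol, one_mul]

lemma y_lower {n : ℕ} (hn : 0 < n) (W : ℕ → Matrix (Fin n) (Fin n) ℝ)
    (hWnonneg : ∀ t i j, 0 ≤ W t i j) (hWcol : ∀ t j, ∑ i, W t i j = 1)
    (hWdiag : ∀ t i, 0 < W t i i)
    (β : ℝ) (hβ : 0 < β)
    (hWβ : ∀ t i j, 0 < W t i j → β ≤ W t i j) (w : ℕ)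
    (hw : ∀ t i j, β ^ w ≤ pPhi W t w i j)
    (y : ℕ → Fin n → ℝ) (hy0 : ∀ i, y 0 i = 1)
    (hyrec : ∀ t i, y (t + 1) i = ∑ j, W t i j * y t j) (t : ℕ) (i : Fin n) : β ^ w ≤ y t i := by
  have hy : ∀ t i, β ^ t ≤ y t i := by
    intro t
    induction t with
    | zero => simp [hy0]
    | succ t ih =>
      intro i
      rw [hyrec]
      calc β ^ (t+1) = β * β ^ t := by ring
      _ ≤ W t i i * y t i :=
        mul_le_mul (hWβ _ _ _ (hWdiag _ _)) (ih i) (by positivity) (hWnonneg _ _ _)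
      _ ≤ _ := Finset.single_le_sum (f := fun l => W t i l * y t l)
        (fun l _ => mul_nonneg (hWnonneg _ _ _) ((pow_pos hβ _).le.trans (ih l))) (Finset.mem_univ i)
  have hβ1 : β ≤ 1 := by
    rw [← hWcol 0 i]
    exact (hWβ 0 i i (hWdiag _ _)).trans
      (Finset.single_le_sum (f := fun l => W 0 l i) (fun l _ => hWnonneg _ _ _) (Finset.mem_univ i))
  rcases le_total t w with h | h
  · exact (pow_le_pow_of_le_one hβ.le hβ1 h).trans (hy t i)
  · obtain ⟨s, rfl⟩ : ∃ s, t = s + w := ⟨t - w, by omega⟩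
    rw [y_phi W y hyrec]
    calc β ^ w ≤ β ^ w * n := le_mul_of_one_le_right (by positivity) (by exact_mod_cast hn)
      _ = ∑ l, β ^ w * y s l := by rw [← Finset.mul_sum, y_sum W y hWcol hy0 hyrec]
      _ ≤ _ := Finset.sum_le_sum fun l _ =>
        mul_le_mul_of_nonneg_right (hw _ _ _) ((pow_pos hβ _).le.trans (hy s l))

/-- diameter -/
noncomputable def pV {n : ℕ} {E : Type*} [NormedAddCommGroup E] (z : Fin n → E) : ℝ :=
  ‖fun p : Fin n × Fin n => z p.1 - z p.2‖

lemma pV_nonneg {n : ℕ} {E : Type*} [NormedAddCommGroup E] (z : Fin n → E) : 0 ≤ pV z :=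
  norm_nonneg _

lemma le_pV {n : ℕ} {E : Type*} [NormedAddCommGroup E] (z : Fin n → E) (i j : Fin n) :
    ‖z i - z j‖ ≤ pV z :=
  norm_le_pi_norm (fun p : Fin n × Fin n => z p.1 - z p.2) (i, j)

lemma pV_le {n : ℕ} {E : Type*} [NormedAddCommGroup E] (z : Fin n → E) (B : ℝ) (hB : 0 ≤ B)
    (h : ∀ i j, ‖z i - z j‖ ≤ B) : pV z ≤ B :=
  (pi_norm_le_iff_of_nonneg hB).mpr fun p => h p.1 p.2

lemma pV_contract {n : ℕ} (hn : 0 < n) {E : Type*} [NormedAddCommGroup E] [NormedSpace ℝ E]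
    (W : ℕ → Matrix (Fin n) (Fin n) ℝ)
    (hWnonneg : ∀ t i j, 0 ≤ W t i j) (hWcol : ∀ t j, ∑ i, W t i j = 1)
    (η : ℝ) (hη : 0 < η) (w : ℕ)
    (hw : ∀ t i j, η ≤ pPhi W t w i j)
    (y : ℕ → Fin n → ℝ) (hy0 : ∀ i, y 0 i = 1)
    (hyrec : ∀ t i, y (t + 1) i = ∑ j, W t i j * y t j) (hyη : ∀ t i, η ≤ y t i)
    (x g z : ℕ → Fin n → E) (a G : ℝ) (ha : 0 ≤ a) (hG : ∀ t i, ‖g t i‖ ≤ G)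
    (hx : ∀ t i, x (t + 1) i = ∑ j, W t i j • (x t j - a • g t j))
    (hz : ∀ t i, z t i = (y t i)⁻¹ • x t i) (t : ℕ) :
    pV (z (t + w)) ≤ (1 - η * η / n) * pV (z t) + 2 * (w * (n * (a * G))) / η := by
  have hn' : (0 : ℝ) < n := by exact_mod_cast hn
  have hy : ∀ t i, 0 < y t i := fun t i => hη.trans_le (hyη t i)
  have hyn : ∀ t i, y t i ≤ n := fun t i => by
    rw [← y_sum W y hWcol hy0 hyrec t]
    exact Finset.single_le_sum (fun l _ => (hy t l).le) (Finset.mem_univ i)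
  set Q : Fin n → Fin n → ℝ := fun i l => (y (t + w) i)⁻¹ * (pPhi W t w i l * y t l) with hQ
  have hQε : ∀ i l, η * η / n ≤ Q i l := by
    intro i l
    simp only [hQ]
    rw [div_eq_inv_mul]
    have h1 : (n : ℝ)⁻¹ ≤ (y (t + w) i)⁻¹ := inv_anti₀ (hy _ _) (hyn _ _)
    have h2 : η * η ≤ pPhi W t w i l * y t l :=
      mul_le_mul (hw _ _ _) (hyη _ _) hη.le (hη.le.trans (hw _ _ _))
    exact mul_le_mul h1 h2 (by positivity) (inv_pos.mpr (hy _ _)).le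
  have hQ0 : ∀ i l, 0 ≤ Q i l := fun i l => le_trans (by positivity) (hQε i l)
  have hQ1 : ∀ i, ∑ l, Q i l = 1 := by
    intro i
    simp only [hQ]
    rw [← Finset.mul_sum, ← y_phi W y hyrec]
    exact inv_mul_cancel₀ (hy _ _).ne'
  have hP := pPhi_pert W hWnonneg hWcol x g a G ha hG hx t w
  have hi : ∀ i, ‖z (t + w) i - ∑ l, Q i l • z t l‖ ≤ (w * (n * (a * G))) / η := by
    intro i
    have e : z (t + w) i - ∑ l, Q i l • z t l
        = (y (t + w) i)⁻¹ • (x (t + w) i - ∑ l, pPhi W t w i l • x t l) := by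
      rw [hz, smul_sub, Finset.smul_sum]
      congr 1
      refine Finset.sum_congr rfl fun l _ => ?_
      rw [hz, smul_smul, smul_smul]
      congr 1
      simp only [hQ]
      have := (hy t l).ne'
      field_simp
    rw [e, norm_smul, Real.norm_of_nonneg (inv_pos.mpr (hy _ _)).le, div_eq_inv_mul]
    refine mul_le_mul (inv_anti₀ hη (hyη _ _)) ?_ (norm_nonneg _) (inv_pos.mpr hη).le
    exact (Finset.single_le_sum (f := fun i => ‖x (t + w) i - ∑ l, pPhi W t w i l • x t l‖)
      (fun _ _ => norm_nonneg _) (Finset.mem_univ i)).trans hP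
  have hij : ∀ i j, ‖z (t + w) i - z (t + w) j‖ ≤ (1 - η * η / n) * pV (z t) + 2 * (w * (n * (a * G))) / η := by
    intro i j
    have hc := row_contract (Q i) (Q j) (hQ0 i) (hQ0 j) (hQ1 i) (hQ1 j) _ (hQε j) (z t) (pV (z t))
      (le_pV _) (pV_nonneg _)
    have e : z (t + w) i - z (t + w) j = (z (t + w) i - ∑ l, Q i l • z t l)
       + (∑ l, Q i l • z t l - ∑ l, Q j l • z t l) - (z (t + w) j - ∑ l, Q j l • z t l) := by abel
    rw [e]
    refine (norm_sub_le _ _).trans ?_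
    have h3 := norm_add_le (z (t + w) i - ∑ l, Q i l • z t l) (∑ l, Q i l • z t l - ∑ l, Q j l • z t l)
    have h4 := hi i
    have h5 := hi j
    have e2 : 2 * (w * (n * (a * G))) / η = (w * (n * (a * G))) / η + (w * (n * (a * G))) / η := by ring
    rw [e2]
    linarith
  exact pV_le _ _ ((norm_nonneg _).trans (hij ⟨0, hn⟩ ⟨0, hn⟩)) hij

/-- abstract summation of the contraction -/
lemma V_sum (V : ℕ → ℝ) (hV : ∀ t, 0 ≤ V t) (w : ℕ) (ε c D : ℝ) (hε : 0 < ε)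
    (hs : ∀ s < w, V s ≤ D) (hr : ∀ t, V (t + w) ≤ (1 - ε) * V t + c) (T : ℕ) :
    ∑ t ∈ Finset.range T, V t ≤ (w * D + T * c) / ε := by
  rw [le_div_iff₀ hε]
  have h1 : ∑ t ∈ Finset.range T, V t ≤ ∑ t ∈ Finset.range (w + T), V t :=
    Finset.sum_le_sum_of_subset_of_nonneg (Finset.range_mono (by omega)) fun i _ _ => hV i
  rw [Finset.sum_range_add] at h1
  have h2 : ∑ t ∈ Finset.range w, V t ≤ w * D := by
    refine (Finset.sum_le_sum fun s hs' => hs s (Finset.mem_range.mp hs')).trans ?_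
    simp
  have h3 : ∑ t ∈ Finset.range T, V (w + t) ≤ (1 - ε) * ∑ t ∈ Finset.range T, V t + T * c := by
    refine (Finset.sum_le_sum fun s _ => (add_comm w s ▸ hr s : V (w + s) ≤ (1 - ε) * V s + c)).trans ?_
    rw [Finset.sum_add_distrib, ← Finset.mul_sum]
    simp
  linarith

lemma V_bdd (V : ℕ → ℝ) (w : ℕ) (hw : 0 < w) (ε c D : ℝ) (hε : 0 < ε) (hε1 : ε ≤ 1)
    (hD : 0 ≤ D) (hc : 0 ≤ c)
    (hs : ∀ s < w, V s ≤ D) (hr : ∀ t, V (t + w) ≤ (1 - ε) * V t + c) (t : ℕ) :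
    V t ≤ D + c / ε := by
  induction t using Nat.strong_induction_on with
  | _ t ih =>
    rcases lt_or_ge t w with h | h
    · have := hs t h
      have : 0 ≤ c / ε := by positivity
      linarith
    · obtain ⟨s, rfl⟩ : ∃ s, t = s + w := ⟨t - w, by omega⟩
      have h1 := ih s (by omega)
      have h2 := mul_le_mul_of_nonneg_left h1 (sub_nonneg.mpr hε1)
      have h3 : (1 - ε) * (D + c / ε) + c = D + c / ε - ε * D := by field_simp; ring
      have h4 := hr s
      nlinarith [mul_nonneg hε.le hD]

lemma xbar_close {n : ℕ} (hn : 0 < n) {E : Type*} [NormedAddCommGroup E] [NormedSpace ℝ E]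
    (y : Fin n → ℝ) (hy : ∀ i, 0 < y i) (hys : ∑ i, y i = n) (x z : Fin n → E)
    (hz : ∀ i, z i = (y i)⁻¹ • x i) (k : Fin n) :
    ‖z k - (n : ℝ)⁻¹ • ∑ i, x i‖ ≤ pV z := by
  have hn' : (0 : ℝ) < n := by exact_mod_cast hn
  have e : z k - (n : ℝ)⁻¹ • ∑ i, x i = (n : ℝ)⁻¹ • ∑ i, y i • (z k - z i) := by
    simp only [smul_sub, Finset.sum_sub_distrib]
    rw [← Finset.sum_smul, hys, smul_smul, inv_mul_cancel₀ hn'.ne', one_smul]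
    congr 2
    refine Finset.sum_congr rfl fun i _ => ?_
    rw [hz, smul_smul, mul_inv_cancel₀ (hy i).ne', one_smul]
  rw [e, norm_smul, Real.norm_of_nonneg (inv_pos.mpr hn').le, inv_mul_le_iff₀ hn']
  refine (norm_sum_le _ _).trans ?_
  rw [← hys, Finset.sum_mul]
  refine Finset.sum_le_sum fun i _ => ?_
  rw [norm_smul, Real.norm_of_nonneg (hy i).le]
  exact mul_le_mul_of_nonneg_left (le_pV z k i) (hy i).le

lemma descent {n : ℕ} (hn : 0 < n) {E : Type*} [NormedAddCommGroup E] [InnerProductSpace ℝ E]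
    (W : Matrix (Fin n) (Fin n) ℝ) (hWcol : ∀ j, ∑ i, W i j = 1)
    (x x' g z : Fin n → E) (a G : ℝ) (ha : 0 ≤ a) (hG0 : 0 ≤ G) (hG : ∀ i, ‖g i‖ ≤ G)
    (hx : ∀ i, x' i = ∑ j, W i j • (x j - a • g j)) (f : Fin n → E → ℝ) (zs : E) (V : ℝ)
    (hV : ∀ k, ‖z k - (n : ℝ)⁻¹ • ∑ i, x i‖ ≤ V)
    (hsub : ∀ j, f j (z j) + ⟪g j, zs - z j⟫_ℝ ≤ f j zs) :
    ‖(n : ℝ)⁻¹ • ∑ i, x' i - zs‖ ^ 2 ≤ ‖(n : ℝ)⁻¹ • ∑ i, x i - zs‖ ^ 2 + a ^ 2 * G ^ 2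
      + 2 * a * G * V - 2 * a * ((n : ℝ)⁻¹ * ∑ j, (f j (z j) - f j zs)) := by
  have hn' : (0 : ℝ) < n := by exact_mod_cast hn
  set p := (n : ℝ)⁻¹ • ∑ i, x i with hp
  set gb := (n : ℝ)⁻¹ • ∑ i, g i with hgb
  have e1 : (n : ℝ)⁻¹ • ∑ i, x' i - zs = (p - zs) - a • gb := by
    have : ∑ i, x' i = ∑ j, (x j - a • g j) := by
      simp only [hx]
      rw [Finset.sum_comm]
      refine Finset.sum_congr rfl fun j _ => ?_
      rw [← Finset.sum_smul, hWcol, one_smul]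
    rw [this, Finset.sum_sub_distrib, ← Finset.smul_sum, smul_sub, hp, hgb, smul_comm a]
    abel
  have hgbn : ‖gb‖ ≤ G := by
    rw [hgb, norm_smul, Real.norm_of_nonneg (inv_pos.mpr hn').le, inv_mul_le_iff₀ hn']
    refine (norm_sum_le _ _).trans ((Finset.sum_le_sum fun i _ => hG i).trans ?_)
    simp
  have hin : (n : ℝ)⁻¹ * ∑ j, (f j (z j) - f j zs) - G * V ≤ ⟪p - zs, gb⟫_ℝ := by
    have hj : ∀ j, (f j (z j) - f j zs) - G * V ≤ ⟪p - zs, g j⟫_ℝ := by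
      intro j
      have e : ⟪p - zs, g j⟫_ℝ = - ⟪g j, z j - p⟫_ℝ - ⟪g j, zs - z j⟫_ℝ := by
        rw [real_inner_comm]
        simp only [inner_sub_right]
        ring
      have h1 : ⟪g j, z j - p⟫_ℝ ≤ G * V :=
        (real_inner_le_norm _ _).trans (mul_le_mul (hG j) (hV j) (norm_nonneg _) hG0)
      have := hsub j
      linarith
    have hs := Finset.sum_le_sum (s := Finset.univ) fun j _ => hj j
    rw [Finset.sum_sub_distrib, ← inner_sum] at hs
    simp only [Finset.sum_const, Finset.card_univ, Fintype.card_fin, nsmul_eq_mul] at hs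
    rw [hgb, inner_smul_right]
    have := mul_le_mul_of_nonneg_left hs (inv_pos.mpr hn').le
    rw [mul_sub, ← mul_assoc, inv_mul_cancel₀ hn'.ne', one_mul] at this
    exact this
  rw [e1, norm_sub_sq_real, norm_smul, Real.norm_of_nonneg ha, inner_smul_right, mul_pow]
  have h1 : ‖gb‖ ^ 2 ≤ G ^ 2 := pow_le_pow_left₀ (norm_nonneg _) hgbn 2
  have h2 := mul_le_mul_of_nonneg_left h1 (sq_nonneg a)
  have h3 := mul_le_mul_of_nonneg_left hin ha
  linarith

lemma consensus (n : ℕ) (hn : 0 < n)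
    (W : ℕ → Matrix (Fin n) (Fin n) ℝ)
    (hWnonneg : ∀ t i j, 0 ≤ W t i j)
    (hWcol : ∀ t j, ∑ i, W t i j = 1)
    (hWdiag : ∀ t i, 0 < W t i i)
    (β : ℝ) (hβ : 0 < β)
    (hWβ : ∀ t i j, 0 < W t i j → β ≤ W t i j)
    (L : ℕ) (hL : 0 < L)
    (hUSC : ∀ t : ℕ, ∀ i j : Fin n,
      Relation.TransGen (fun u v : Fin n => ∃ k ∈ Finset.Ico t (t + L), 0 < W k v u) i j)
    {E : Type*} [NormedAddCommGroup E] [NormedSpace ℝ E]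
    (y : ℕ → Fin n → ℝ)
    (hy0 : ∀ i, y 0 i = 1)
    (hyrec : ∀ t i, y (t + 1) i = ∑ j, W t i j * y t j)
    (x g : ℕ → ℕ → Fin n → E)
    (x0 : Fin n → E)
    (hx0 : ∀ T, x T 0 = x0)
    (hxrec : ∀ T : ℕ, 1 ≤ T → ∀ t i,
      x T (t + 1) i = ∑ j, W t i j • (x T t j - (1 / Real.sqrt T) • g T t j))
    (z : ℕ → ℕ → Fin n → E)
    (hz : ∀ T t i, z T t i = (y t i)⁻¹ • x T t i)
    (G : ℝ) (hG0 : 0 ≤ G) (hG : ∀ T t i, ‖g T t i‖ ≤ G) :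
    (∀ t i, 0 < y t i) ∧ ∃ B D : ℝ, 0 ≤ B ∧ 0 ≤ D ∧ ∀ T : ℕ, 1 ≤ T →
      (∀ t, pV (z T t) ≤ B) ∧ (1 / Real.sqrt T) * ∑ t ∈ Finset.range T, pV (z T t) ≤ D := by
  have hn' : (0 : ℝ) < n := by exact_mod_cast hn
  have hn1 : (1 : ℝ) ≤ n := by exact_mod_cast hn
  set w := n * L with hw
  have hw0 : 0 < w := Nat.mul_pos hn hL
  have hphi := pPhi_pos W hWnonneg hWdiag β hβ hWβ L hUSC
  rw [← hw] at hphi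
  have hyη := y_lower hn W hWnonneg hWcol hWdiag β hβ hWβ w hphi y hy0 hyrec
  set η := β ^ w with hηdef
  have hη : 0 < η := pow_pos hβ _
  have hη1 : η ≤ 1 := by have := hyη 0 ⟨0, hn⟩; rwa [hy0] at this
  have hε : 0 < η * η / n := by positivity
  have hε1 : η * η / n ≤ 1 := by
    rw [div_le_one hn']; nlinarith
  set ε := η * η / n with hεdef
  set c0 := 2 * (w * (n * G)) / η with hc0
  have hc00 : 0 ≤ c0 := by positivity
  set D0 := 2 * ((∑ i, ‖x0 i‖) + w * (n * G)) / η with hD0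
  have hD00 : 0 ≤ D0 := by
    have : 0 ≤ ∑ i, ‖x0 i‖ := Finset.sum_nonneg fun _ _ => norm_nonneg _
    positivity
  refine ⟨fun t i => hη.trans_le (hyη t i), D0 + c0 / ε, (w * D0 + c0) / ε, by positivity, by positivity, ?_⟩
  intro T hT
  have hT' : (1 : ℝ) ≤ T := by exact_mod_cast hT
  have hsT : 1 ≤ Real.sqrt T := Real.one_le_sqrt.mpr hT'
  have ha1 : 1 / Real.sqrt T ≤ 1 := by rw [div_le_one (by linarith)]; exact hsT
  have ha0 : 0 < 1 / Real.sqrt T := by positivity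
  have haT : (1 / Real.sqrt T) * (1 / Real.sqrt T) * T = 1 := by
    have := Real.mul_self_sqrt (show (0:ℝ) ≤ T by linarith)
    field_simp
    nlinarith
  have hxT := hxrec T hT
  set a := 1 / Real.sqrt T with hadef
  have hcon := pV_contract hn W hWnonneg hWcol η hη w hphi y hy0 hyrec hyη (x T) (g T) (z T) a G ha0.le
    (hG T) hxT (hz T)
  have e : 2 * (w * (n * (a * G))) / η = a * c0 := by rw [hc0]; ring
  rw [e, ← hεdef] at hcon
  have hs : ∀ s < w, pV (z T s) ≤ D0 := by
    intro s hsw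
    have hl := x_l1 W hWnonneg hWcol (x T) (g T) a G ha0.le (hG T) hxT s
    rw [hx0] at hl
    have h1 : (s : ℝ) * (n * (a * G)) ≤ w * (n * G) := by
      have : (s : ℝ) ≤ w := by exact_mod_cast hsw.le
      have h2 : a * G ≤ G := by nlinarith
      have h3 : 0 ≤ a * G := by positivity
      gcongr
    have hi : ∀ i, ‖z T s i‖ ≤ ((∑ i, ‖x0 i‖) + w * (n * G)) / η := by
      intro i
      have hyp := hη.trans_le (hyη s i)
      rw [hz, norm_smul, Real.norm_of_nonneg (inv_pos.mpr hyp).le, div_eq_inv_mul]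
      refine mul_le_mul (inv_anti₀ hη (hyη _ _)) ?_ (norm_nonneg _) (inv_pos.mpr hη).le
      have := Finset.single_le_sum (f := fun i => ‖x T s i‖) (fun _ _ => norm_nonneg _) (Finset.mem_univ i)
      linarith
    refine pV_le _ _ hD00 fun i j => (norm_sub_le _ _).trans ?_
    have h1 := hi i
    have h2 := hi j
    rw [hD0, mul_div_assoc]
    linarith
  constructor
  · intro t
    refine (V_bdd (fun t => pV (z T t)) w hw0 ε (a * c0) D0 hε hε1 hD00 (by positivity) hs hcon t).trans ?_
    have : a * c0 ≤ c0 := by nlinarith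
    gcongr
  · have h1 := V_sum (fun t => pV (z T t)) (fun t => pV_nonneg _) w ε (a * c0) D0 hε hs hcon T
    have h2 := mul_le_mul_of_nonneg_left h1 ha0.le
    refine h2.trans ?_
    rw [← mul_div_assoc]
    have h3 : a * (w * D0 + T * (a * c0)) = a * (w * D0) + (a * a * T) * c0 := by ring
    rw [h3, haT, one_mul]
    have : a * (w * D0) ≤ w * D0 := by
      have : 0 ≤ w * D0 := by positivity
      nlinarith
    gcongr

theorem stmt_7
    (n : ℕ) (hn : 0 < n)
    (W : ℕ → Matrix (Fin n) (Fin n) ℝ)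
    (hWnonneg : ∀ t i j, 0 ≤ W t i j)
    (hWcol : ∀ t j, ∑ i, W t i j = 1)
    (hWdiag : ∀ t i, 0 < W t i i)
    (β : ℝ) (hβ : 0 < β)
    (hWβ : ∀ t i j, 0 < W t i j → β ≤ W t i j)
    (L : ℕ) (hL : 0 < L)
    (hUSC : ∀ t : ℕ, ∀ i j : Fin n,
      Relation.TransGen (fun u v : Fin n => ∃ k ∈ Finset.Ico t (t + L), 0 < W k v u) i j)
    (d : ℕ)
    (y : ℕ → Fin n → ℝ)
    (hy0 : ∀ i, y 0 i = 1)
    (hyrec : ∀ t i, y (t + 1) i = ∑ j, W t i j * y t j)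
    (x g : ℕ → ℕ → Fin n → EuclideanSpace ℝ (Fin d))
    (x0 g0 : Fin n → EuclideanSpace ℝ (Fin d))
    (hx0 : ∀ T, x T 0 = x0)
    (hg0 : ∀ T, g T 0 = g0)
    (hxrec : ∀ T : ℕ, 1 ≤ T → ∀ t i,
      x T (t + 1) i = ∑ j, W t i j • (x T t j - (1 / Real.sqrt T) • g T t j))
    (z : ℕ → ℕ → Fin n → EuclideanSpace ℝ (Fin d))
    (hz : ∀ T t i, z T t i = (y t i)⁻¹ • x T t i)
    (G : ℝ) (hG : ∀ T t i, ‖g T t i‖ ≤ G)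
    (f : Fin n → EuclideanSpace ℝ (Fin d) → ℝ)
    (hconv : ∀ i, ConvexOn ℝ Set.univ (f i))
    (F : EuclideanSpace ℝ (Fin d) → ℝ)
    (hF : ∀ w, F w = (n : ℝ)⁻¹ * ∑ i, f i w)
    (zstar : EuclideanSpace ℝ (Fin d))
    (hmin : ∀ w, F zstar ≤ F w)
    (hsub : ∀ T t j w, f j (z T t j) + ⟪g T t j, w - z T t j⟫_ℝ ≤ f j w)
    (zbar : ℕ → ℕ → EuclideanSpace ℝ (Fin d))
    (hzbar : ∀ T t, zbar T t = (n : ℝ)⁻¹ • ∑ i, z T t i)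
    :
    ∃ C : ℝ, 0 < C ∧ ∀ T : ℕ, 1 ≤ T → ∀ k : Fin n,
      F ((T : ℝ)⁻¹ • ∑ τ ∈ Finset.range T, z T τ k) - F zstar ≤ C / Real.sqrt T := by
  have hn' : (0 : ℝ) < n := by exact_mod_cast hn
  have hG0 : 0 ≤ G := (norm_nonneg _).trans (hG 0 0 ⟨0, hn⟩)
  obtain ⟨hy, B, D, hB, hD, hcons⟩ := consensus n hn W hWnonneg hWcol hWdiag β hβ hWβ L hL hUSC
    y hy0 hyrec x g x0 hx0 hxrec z hz G hG0 hG
  have hmin' : ∀ w, ∑ i, f i zstar ≤ ∑ i, f i w := by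
    intro w
    have := hmin w
    rw [hF, hF] at this
    exact le_of_mul_le_mul_left this (inv_pos.mpr hn')
  obtain ⟨K, hK0, hK⟩ := opt_lower f hconv zstar hmin'
  set e0 := ‖(n : ℝ)⁻¹ • ∑ i, x0 i - zstar‖ ^ 2 with he0
  set R := e0 + G ^ 2 + 2 * (G + K) * D + 1 with hR
  have hR1 : 1 ≤ R := by
    have : 0 ≤ e0 := sq_nonneg _
    have : 0 ≤ 2 * (G + K) * D := by positivity
    nlinarith [sq_nonneg G]
  have hlip : ∀ i, ∃ K' : NNReal, LipschitzOnWith K' (f i) (Metric.closedBall zstar (R + B)) := fun i =>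
    LocallyLipschitzOn.exists_lipschitzOnWith_of_compact (isCompact_closedBall _ _)
      ((hconv i).locallyLipschitz.locallyLipschitzOn)
  choose K' hK' using hlip
  set M : ℝ := ∑ i, (K' i : ℝ) with hM
  have hM0 : 0 ≤ M := Finset.sum_nonneg fun i _ => (K' i).2
  refine ⟨R + (G + M) * D, by positivity, ?_⟩
  intro T hT k
  obtain ⟨hVB, hVD⟩ := hcons T hT
  have hT' : (1 : ℝ) ≤ T := by exact_mod_cast hT
  have hsT : 1 ≤ Real.sqrt T := Real.one_le_sqrt.mpr hT'
  have hsT2 := Real.mul_self_sqrt (show (0:ℝ) ≤ T by linarith)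
  have ha0 : 0 < 1 / Real.sqrt T := by positivity
  have haT : (1 / Real.sqrt T) ^ 2 * T = 1 := by
    field_simp
    nlinarith
  have haT2 : (1 / Real.sqrt T) * T = Real.sqrt T := by
    field_simp
    nlinarith
  have hxT := hxrec T hT
  set a := 1 / Real.sqrt T with hadef
  set V : ℕ → ℝ := fun t => pV (z T t) with hVdef
  have hV0 : ∀ t, 0 ≤ V t := fun t => pV_nonneg _
  set p : ℕ → EuclideanSpace ℝ (Fin d) := fun t => (n : ℝ)⁻¹ • ∑ i, x T t i with hp
  have hclose : ∀ t i, ‖z T t i - p t‖ ≤ V t := fun t i =>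
    xbar_close hn (y t) (hy t) (y_sum W y hWcol hy0 hyrec t) (x T t) (z T t) (hz T t) i
  have hdes : ∀ t, ‖p (t + 1) - zstar‖ ^ 2 ≤ ‖p t - zstar‖ ^ 2 + a ^ 2 * G ^ 2
      + 2 * a * G * V t - 2 * a * ((n : ℝ)⁻¹ * ∑ j, (f j (z T t j) - f j zstar)) := fun t =>
    descent hn (W t) (hWcol t) (x T t) (x T (t + 1)) (g T t) (z T t) a G ha0.le hG0 (hG T t) (hxT t)
      f zstar (V t) (hclose t) (fun j => hsub T t j zstar)
  have hlow : ∀ t, -(K * V t) ≤ (n : ℝ)⁻¹ * ∑ j, (f j (z T t j) - f j zstar) := by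
    intro t
    have h1 := hK (p t) (z T t) (V t) (hclose t)
    have h2 := mul_le_mul_of_nonneg_left h1 (inv_pos.mpr hn').le
    have e : (n : ℝ)⁻¹ * -(n * K * V t) = -(K * V t) := by field_simp
    rwa [e] at h2
  have hstep : ∀ t, ‖p (t + 1) - zstar‖ ^ 2 ≤ ‖p t - zstar‖ ^ 2 + a ^ 2 * G ^ 2
      + 2 * (G + K) * (a * V t) := by
    intro t
    have h1 := hdes t
    have h2 := mul_le_mul_of_nonneg_left (hlow t) ha0.le
    linarith
  have hp0 : ‖p 0 - zstar‖ ^ 2 = e0 := by simp only [hp, he0, hx0]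
  have hind : ∀ t, ‖p t - zstar‖ ^ 2 ≤ e0 + t * (a ^ 2 * G ^ 2)
      + 2 * (G + K) * (a * ∑ s ∈ Finset.range t, V s) := by
    intro t
    induction t with
    | zero => simp [hp0]
    | succ t ih =>
      have := hstep t
      rw [Finset.sum_range_succ]
      push_cast
      linarith
  have hbd : ∀ t ≤ T, ‖p t - zstar‖ ≤ R := by
    intro t ht
    have h1 := hind t
    have h2 : ∑ s ∈ Finset.range t, V s ≤ ∑ s ∈ Finset.range T, V s :=
      Finset.sum_le_sum_of_subset_of_nonneg (Finset.range_mono ht) fun i _ _ => hV0 i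
    have h3 : a * ∑ s ∈ Finset.range t, V s ≤ D := (mul_le_mul_of_nonneg_left h2 ha0.le).trans hVD
    have h4 : 2 * (G + K) * (a * ∑ s ∈ Finset.range t, V s) ≤ 2 * (G + K) * D :=
      mul_le_mul_of_nonneg_left h3 (by positivity)
    have h5 : (t : ℝ) * (a ^ 2 * G ^ 2) ≤ G ^ 2 := by
      have : (t : ℝ) ≤ T := by exact_mod_cast ht
      have := mul_le_mul_of_nonneg_right this (show 0 ≤ a ^ 2 * G ^ 2 by positivity)
      have e : (T : ℝ) * (a ^ 2 * G ^ 2) = (a ^ 2 * T) * G ^ 2 := by ring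
      rw [e, haT, one_mul] at this
      exact this
    have h6 : ‖p t - zstar‖ ^ 2 ≤ R := by linarith
    nlinarith [norm_nonneg (p t - zstar)]
  have hball : ∀ t ≤ T, ∀ i, z T t i ∈ Metric.closedBall zstar (R + B) := by
    intro t ht i
    rw [mem_closedBall_iff_norm]
    have e : z T t i - zstar = (p t - zstar) + (z T t i - p t) := by abel
    rw [e]
    have h1 := (hclose t i).trans (hVB t)
    exact (norm_add_le _ _).trans (add_le_add (hbd t ht) h1)
  have hup : ∀ t ≤ T, F (z T t k) - F zstar - M * V t ≤ (n : ℝ)⁻¹ * ∑ j, (f j (z T t j) - f j zstar) := by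
    intro t ht
    have hj : ∀ j, f j (z T t k) - f j zstar - M * V t ≤ f j (z T t j) - f j zstar := by
      intro j
      have hl := (hK' j).dist_le_mul _ (hball t ht k) _ (hball t ht j)
      rw [dist_eq_norm, dist_eq_norm] at hl
      have h1 := (le_abs_self _).trans hl
      have h2 : (K' j : ℝ) ≤ M := Finset.single_le_sum (f := fun i => (K' i : ℝ))
        (fun i _ => (K' i).2) (Finset.mem_univ j)
      have h3 := mul_le_mul h2 (le_pV (z T t) k j) (norm_nonneg _) hM0
      have h4 : M * pV (z T t) = M * V t := rfl
      linarith
    have hs := mul_le_mul_of_nonneg_left (Finset.sum_le_sum (s := Finset.univ) fun j _ => hj j)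
      (inv_pos.mpr hn').le
    rw [Finset.sum_sub_distrib, Finset.sum_sub_distrib] at hs
    simp only [Finset.sum_const, Finset.card_univ, Fintype.card_fin, nsmul_eq_mul] at hs
    rw [mul_sub, mul_sub, ← mul_assoc _ (n : ℝ), inv_mul_cancel₀ hn'.ne', one_mul, ← hF, ← hF] at hs
    exact hs
  have htel : ∀ t ≤ T, ‖p t - zstar‖ ^ 2 + 2 * a * ∑ s ∈ Finset.range t, (F (z T s k) - F zstar)
      ≤ e0 + t * (a ^ 2 * G ^ 2) + 2 * (G + M) * (a * ∑ s ∈ Finset.range t, V s) := by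
    intro t
    induction t with
    | zero => intro _; simp [hp0]
    | succ t ih =>
      intro ht
      have h0 := ih (by omega)
      have h1 := hdes t
      have h2 := mul_le_mul_of_nonneg_left (hup t (by omega)) ha0.le
      rw [Finset.sum_range_succ, Finset.sum_range_succ]
      push_cast
      linarith
  have hfin := htel T le_rfl
  have h5 : (T : ℝ) * (a ^ 2 * G ^ 2) = G ^ 2 := by
    have e : (T : ℝ) * (a ^ 2 * G ^ 2) = (a ^ 2 * T) * G ^ 2 := by ring
    rw [e, haT, one_mul]
  have h6 := mul_le_mul_of_nonneg_left hVD (show 0 ≤ 2 * (G + M) by positivity)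
  have hsum : a * ∑ s ∈ Finset.range T, (F (z T s k) - F zstar) ≤ R + (G + M) * D := by
    have : 0 ≤ 2 * (G + K) * D := by positivity
    have h7 : a * ∑ s ∈ Finset.range T, V s = a * ∑ t ∈ Finset.range T, pV (z T t) := rfl
    rw [h7, h5] at hfin
    have := sq_nonneg (‖p T - zstar‖)
    have : 0 ≤ e0 := sq_nonneg _
    have := sq_nonneg G
    linarith
  have hFconv : ConvexOn ℝ Set.univ F := by
    refine ⟨convex_univ, fun u _ v _ b c hb hc hbc => ?_⟩
    rw [hF, hF, hF]
    have := Finset.sum_le_sum (s := Finset.univ) fun j _ =>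
      (hconv j).2 (Set.mem_univ u) (Set.mem_univ v) hb hc hbc
    have := mul_le_mul_of_nonneg_left this (inv_pos.mpr hn').le
    refine this.trans (le_of_eq ?_)
    simp only [smul_eq_mul, Finset.sum_add_distrib, ← Finset.mul_sum]
    ring
  have hT0 : (0 : ℝ) < T := by linarith
  have hjen := hFconv.map_sum_le (t := Finset.range T) (w := fun _ => (T : ℝ)⁻¹) (p := fun s => z T s k)
    (fun _ _ => (inv_pos.mpr hT0).le) (by simp [hT0.ne']) (fun _ _ => Set.mem_univ _)
  rw [← Finset.smul_sum] at hjen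
  simp only [smul_eq_mul, ← Finset.mul_sum] at hjen
  rw [Finset.sum_sub_distrib] at hsum
  simp only [Finset.sum_const, Finset.card_range, nsmul_eq_mul] at hsum
  have hsp : 0 < Real.sqrt T := by linarith
  rw [le_div_iff₀ hsp]
  have e3 : (T : ℝ)⁻¹ * Real.sqrt T = a := by
    rw [hadef]
    field_simp
    nlinarith
  have h8 := mul_le_mul_of_nonneg_right hjen hsp.le
  have h9 : (T : ℝ)⁻¹ * (∑ s ∈ Finset.range T, F (z T s k)) * Real.sqrt T
      = a * ∑ s ∈ Finset.range T, F (z T s k) := by rw [← e3]; ring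
  rw [h9] at h8
  have h10 : a * (T * F zstar) = F zstar * Real.sqrt T := by rw [← haT2]; ring
  rw [mul_sub, h10] at hsum
  linarith
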